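/- arXiv:1810.01922 — 2 statements merged into one kernel-verified Lean document; each statement's English description precedes it below -/
import Mathlib

section
/- Let Γ be a connected weighted doubled graph, let F ⊆ E be an op-closed subset that is maximal (with respect to inclusion) among op-closed loop-trivial subsets of E, and fix a base vertex ∗ ∈ V. Then there exists a unique function φ : V → ℝ with φ(v) > 0 for all v, φ(∗) = 1, and φ(t(e)) = μ(e)·φ(s(e)) for every e ∈ F. In particular, for every path σ in F with source v and target w one has φ(w) = μ(σ)·φ(v), and for any other choice of base vertex ∗′ the resulting function φ′ satisfies φ′ = φ(∗′)⁻¹·φ, so that up to a positive scaling φ is independent of the base vertex. -/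
/-- A weighted doubled graph: finite vertex set `V`, finite edge set `E`,
source and target maps, an edge involution `op` reversing direction, and a
positive edge weighting `μ` with `μ (op e) = (μ e)⁻¹`. -/
structure WDGraph (V E : Type) [Fintype V] [Fintype E] where
  s : E → V
  t : E → V
  op : E → E
  op_op : ∀ e, op (op e) = e
  s_op : ∀ e, s (op e) = t e
  t_op : ∀ e, t (op e) = s e
  μ : E → ℝ
  μ_pos : ∀ e, 0 < μ e
  μ_op : ∀ e, μ (op e) = (μ e)⁻¹

namespace WDGraph

variable {V E : Type} [Fintype V] [Fintype E]

/-- A path in a weighted doubled graph: a nonempty list of consecutively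
composable edges. -/
structure Path (G : WDGraph V E) where
  edges : List E
  ne : edges ≠ []
  chain : edges.Chain' (fun a b => G.t a = G.s b)

variable {G : WDGraph V E}

/-- The source of a path: the source of its first edge. -/
def Path.source (p : G.Path) : V := G.s (p.edges.head p.ne)

/-- The target of a path: the target of its last edge. -/
def Path.target (p : G.Path) : V := G.t (p.edges.getLast p.ne)

/-- The weight of a path: the product of the weights of its edges. -/
def Path.weight (p : G.Path) : ℝ := (p.edges.map G.μ).prod

/-- A loop is a path whose source equals its target. -/
def Path.IsLoop (p : G.Path) : Prop := p.source = p.target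

/-- A graph is connected if any two distinct vertices are joined by a path. -/
def Connected (G : WDGraph V E) : Prop :=
  ∀ v w : V, v ≠ w → ∃ p : G.Path, p.source = v ∧ p.target = w

/-- A set of edges is `op`-closed if it is stable under the edge involution. -/
def OpClosed (G : WDGraph V E) (F : Set E) : Prop := ∀ e ∈ F, G.op e ∈ F

/-- A set of edges is loop-trivial if every loop all of whose edges lie in it
has weight `1`. -/
def LoopTrivial (G : WDGraph V E) (F : Set E) : Prop :=
  ∀ p : G.Path, (∀ e ∈ p.edges, e ∈ F) → p.IsLoop → p.weight = 1

end WDGraph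

/-!
For positive `φ`, the edges with `φ (t e) = μ e * φ (s e)` form an `op`-closed loop-trivial set;
conversely every `op`-closed loop-trivial `F` lies in such a set: on each connected component of
`F` let `φ v` be the weight of any walk in `F` from a chosen representative to `v`.

Let `F` be maximal and let `S` be a set of vertices which no edge of `F` enters or leaves. Rescaling
`φ` outside `S` keeps it compatible with `F`, and the factor can be chosen so as to make any given
edge leaving `S` compatible as well. By maximality that edge lies in `F`, which is absurd; so no
edge at all leaves `S`, and connectedness forces `S` to be empty or everything. Applied to the set
where two solutions agree, this gives uniqueness.
-/

namespace WDGraph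

variable {V E : Type} [Fintype V] [Fintype E] {G : WDGraph V E} {F : Set E}

/-- `G.HasWalk F u v r`: some walk in `F` from `u` to `v` has weight `r`. In contrast to a `Path`, a
walk may be empty, so that being joined by a walk is an equivalence relation when `F` is
`op`-closed. -/
inductive HasWalk (G : WDGraph V E) (F : Set E) : V → V → ℝ → Prop
  | nil (v : V) : HasWalk G F v v 1
  | cons {e : E} {v : V} {r : ℝ} :
      e ∈ F → HasWalk G F (G.t e) v r → HasWalk G F (G.s e) v (G.μ e * r)

namespace HasWalk

variable {u v w : V} {a b : ℝ}

theorem single {e : E} (he : e ∈ F) : G.HasWalk F (G.s e) (G.t e) (G.μ e) := by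
  simpa only [mul_one] using cons he (nil (G.t e))

theorem trans (h : G.HasWalk F u v a) (k : G.HasWalk F v w b) : G.HasWalk F u w (a * b) := by
  induction h with
  | nil => simpa only [one_mul] using k
  | cons he _ ih => simpa only [mul_assoc] using cons he (ih k)

theorem symm (hF : G.OpClosed F) (h : G.HasWalk F u v a) : G.HasWalk F v u a⁻¹ := by
  induction h with
  | nil => simpa only [inv_one] using nil _
  | @cons e _ _ he _ ih =>
    have back : G.HasWalk F (G.t e) (G.s e) (G.μ e)⁻¹ := by
      simpa only [G.s_op, G.t_op, G.μ_op] using single (G := G) (hF e he)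
    simpa only [mul_inv_rev] using ih.trans back

theorem weight_pos (h : G.HasWalk F u v a) : 0 < a := by
  induction h with
  | nil => exact one_pos
  | cons _ _ ih => exact mul_pos (G.μ_pos _) ih

theorem exists_path (h : G.HasWalk F u v a) :
    (u = v ∧ a = 1) ∨ ∃ p : G.Path,
      (∀ e ∈ p.edges, e ∈ F) ∧ p.source = u ∧ p.target = v ∧ p.weight = a := by
  induction h with
  | nil => exact .inl ⟨rfl, rfl⟩
  | @cons e v r he _ ih =>
    right
    rcases ih with ⟨rfl, rfl⟩ | ⟨⟨l, hne, hchain⟩, hl, hsource, rfl, rfl⟩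
    · exact ⟨⟨[e], List.cons_ne_nil _ _, List.isChain_singleton _⟩, by simpa using he, rfl, rfl,
        by simp [Path.weight]⟩
    · refine ⟨⟨e :: l, List.cons_ne_nil _ _, hchain.cons ?_⟩, List.forall_mem_cons.2 ⟨he, hl⟩, rfl,
        ?_, by simp [Path.weight]⟩
      · rintro b hb
        rw [List.head?_eq_some_head hne, Option.mem_some_iff] at hb
        exact hb ▸ hsource.symm
      · simp only [Path.target, List.getLast_cons hne]

theorem weight_eq_one (hF : G.LoopTrivial F) (h : G.HasWalk F v v a) : a = 1 := by
  rcases h.exists_path with ⟨-, ha⟩ | ⟨p, hp, hsource, htarget, rfl⟩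
  · exact ha
  · exact hF p hp (hsource.trans htarget.symm)

theorem weight_unique (hop : G.OpClosed F) (htriv : G.LoopTrivial F)
    (h : G.HasWalk F u v a) (k : G.HasWalk F u v b) : a = b :=
  (mul_inv_eq_one₀ k.weight_pos.ne').1 ((h.trans (k.symm hop)).weight_eq_one htriv)

theorem target_mem {S : Set V} (hS : ∀ e ∈ F, G.s e ∈ S → G.t e ∈ S) (h : G.HasWalk F u v a)
    (hu : u ∈ S) : v ∈ S := by
  induction h with
  | nil => exact hu
  | cons he _ ih => exact ih (hS _ he hu)

end HasWalk

theorem Path.hasWalk (p : G.Path) (hp : ∀ e ∈ p.edges, e ∈ F) :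
    G.HasWalk F p.source p.target p.weight := by
  obtain ⟨l, hne, hchain⟩ := p
  simp only [Path.source, Path.target, Path.weight] at hp ⊢
  induction hchain with
  | nil => exact absurd rfl hne
  | singleton e => simpa using HasWalk.single (hp e List.mem_cons_self)
  | @cons_cons e e' l htail _ ih =>
    have tail := ih (List.cons_ne_nil _ _) (List.forall_mem_cons.1 hp).2
    rw [List.head_cons, ← htail] at tail
    rw [List.getLast_cons (List.cons_ne_nil _ _), List.map_cons, List.prod_cons]
    exact .cons (hp e List.mem_cons_self) tail

theorem Connected.eq_univ (hconn : G.Connected) {S : Set V} (hne : S.Nonempty)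
    (hS : ∀ e, G.s e ∈ S → G.t e ∈ S) : S = Set.univ := by
  obtain ⟨v, hv⟩ := hne
  refine Set.eq_univ_of_forall fun w => ?_
  rcases eq_or_ne v w with rfl | hvw
  · exact hv
  · obtain ⟨p, rfl, rfl⟩ := hconn v w hvw
    exact (p.hasWalk fun e _ => Set.mem_univ e).target_mem (fun e _ => hS e) hv

/-- The edges along which `φ` is multiplied by `μ`. The equation required of the vertex functional
of `F` is `F ⊆ G.compatibleEdges φ`. -/
def compatibleEdges (G : WDGraph V E) (φ : V → ℝ) : Set E :=
  {e | φ (G.t e) = G.μ e * φ (G.s e)}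

variable {φ ψ : V → ℝ}

theorem mem_compatibleEdges {e : E} :
    e ∈ G.compatibleEdges φ ↔ φ (G.t e) = G.μ e * φ (G.s e) :=
  Iff.rfl

theorem HasWalk.apply_target {u v : V} {r : ℝ} (h : G.HasWalk (G.compatibleEdges φ) u v r) :
    φ v = r * φ u := by
  induction h with
  | nil => exact (one_mul _).symm
  | cons he _ ih => rw [ih, mem_compatibleEdges.1 he, mul_left_comm, mul_assoc]

theorem Path.apply_target (p : G.Path) (hp : ∀ e ∈ p.edges, e ∈ G.compatibleEdges φ) :
    φ p.target = p.weight * φ p.source :=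
  (p.hasWalk hp).apply_target

theorem opClosed_compatibleEdges (G : WDGraph V E) (φ : V → ℝ) :
    G.OpClosed (G.compatibleEdges φ) := by
  intro e he
  rw [mem_compatibleEdges] at he ⊢
  rw [G.s_op, G.t_op, G.μ_op, he, inv_mul_cancel_left₀ (G.μ_pos e).ne']

theorem loopTrivial_compatibleEdges (hφ : ∀ v, φ v ≠ 0) : G.LoopTrivial (G.compatibleEdges φ) := by
  intro p hp hloop
  have hweight : p.weight * φ p.source = φ p.source := by
    rw [← p.apply_target hp, ← show p.source = p.target from hloop]
  exact (mul_eq_right₀ (hφ _)).1 hweight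

theorem compatibleEdges_subset_smul (G : WDGraph V E) (φ : V → ℝ) (c : ℝ) :
    G.compatibleEdges φ ⊆ G.compatibleEdges (c • φ) := by
  intro e he
  rw [mem_compatibleEdges] at he ⊢
  rw [Pi.smul_apply, Pi.smul_apply, smul_eq_mul, smul_eq_mul, he, mul_left_comm]

theorem subset_compatibleEdges_piecewise {S : Set V} [∀ v, Decidable (v ∈ S)]
    (hS : ∀ e ∈ F, G.s e ∈ S ↔ G.t e ∈ S) (hφ : F ⊆ G.compatibleEdges φ)
    (hψ : F ⊆ G.compatibleEdges ψ) : F ⊆ G.compatibleEdges (S.piecewise φ ψ) := by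
  intro e he
  rw [mem_compatibleEdges]
  by_cases hs : G.s e ∈ S
  · rw [S.piecewise_eq_of_mem _ _ hs, S.piecewise_eq_of_mem _ _ ((hS e he).1 hs)]
    exact hφ he
  · rw [S.piecewise_eq_of_notMem _ _ hs, S.piecewise_eq_of_notMem _ _ (mt (hS e he).2 hs)]
    exact hψ he

/-- The equivalence relation on vertices whose classes are the connected components of `F`. -/
def walkSetoid (hF : G.OpClosed F) : Setoid V where
  r u v := ∃ r, G.HasWalk F u v r
  iseqv :=
    { refl := fun v => ⟨1, .nil v⟩
      symm := fun ⟨_, h⟩ => ⟨_, h.symm hF⟩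
      trans := fun ⟨_, h⟩ ⟨_, k⟩ => ⟨_, h.trans k⟩ }

theorem exists_pos_subset_compatibleEdges (hop : G.OpClosed F) (htriv : G.LoopTrivial F) :
    ∃ φ : V → ℝ, (∀ v, 0 < φ v) ∧ F ⊆ G.compatibleEdges φ := by
  let root (v : V) : V := (Quotient.mk (walkSetoid hop) v).out
  have walk_root (v : V) : ∃ r, G.HasWalk F (root v) v r := Quotient.mk_out (s := walkSetoid hop) v
  choose φ hφ using walk_root
  refine ⟨φ, fun v => (hφ v).weight_pos, fun e he => ?_⟩
  have root_eq : root (G.s e) = root (G.t e) :=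
    congrArg Quotient.out (Quotient.sound (s := walkSetoid hop) ⟨_, .single he⟩)
  have through_source : G.HasWalk F (root (G.t e)) (G.t e) (φ (G.s e) * G.μ e) :=
    root_eq ▸ (hφ (G.s e)).trans (.single he)
  rw [mem_compatibleEdges, mul_comm]
  exact (hφ (G.t e)).weight_unique hop htriv through_source

theorem exists_normalized_subset_compatibleEdges (hop : G.OpClosed F) (htriv : G.LoopTrivial F)
    (v₀ : V) : ∃ φ : V → ℝ, (∀ v, 0 < φ v) ∧ φ v₀ = 1 ∧ F ⊆ G.compatibleEdges φ := by
  obtain ⟨φ, hpos, hφ⟩ := exists_pos_subset_compatibleEdges hop htriv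
  exact ⟨(φ v₀)⁻¹ • φ, fun v => mul_pos (inv_pos.2 (hpos v₀)) (hpos v),
    inv_mul_cancel₀ (hpos v₀).ne', hφ.trans (G.compatibleEdges_subset_smul φ _)⟩

theorem eq_compatibleEdges_of_maximal
    (hF : Maximal (fun F' => G.OpClosed F' ∧ G.LoopTrivial F') F) (hne : ∀ v, φ v ≠ 0)
    (hφ : F ⊆ G.compatibleEdges φ) : F = G.compatibleEdges φ :=
  hF.eq_of_subset ⟨G.opClosed_compatibleEdges φ, loopTrivial_compatibleEdges hne⟩ hφ

theorem target_mem_of_maximal (hF : Maximal (fun F' => G.OpClosed F' ∧ G.LoopTrivial F') F)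
    {S : Set V} (hS : ∀ e ∈ F, G.s e ∈ S ↔ G.t e ∈ S) {e : E} (hs : G.s e ∈ S) : G.t e ∈ S := by
  classical
  by_contra ht
  obtain ⟨φ, hpos, hφ⟩ := exists_pos_subset_compatibleEdges hF.prop.1 hF.prop.2
  -- The factor for which the rescaled function is compatible with `e`.
  let c := G.μ e * φ (G.s e) / φ (G.t e)
  have hc : 0 < c := div_pos (mul_pos (G.μ_pos e) (hpos _)) (hpos _)
  let ψ := S.piecewise φ (c • φ)
  have hψ_mem {v : V} (hv : v ∈ S) : ψ v = φ v := S.piecewise_eq_of_mem _ _ hv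
  have hψ_notMem {v : V} (hv : v ∉ S) : ψ v = c * φ v := S.piecewise_eq_of_notMem _ _ hv
  have hψpos (v : V) : 0 < ψ v := by
    by_cases hv : v ∈ S
    · exact (hψ_mem hv).symm ▸ hpos v
    · exact (hψ_notMem hv).symm ▸ mul_pos hc (hpos v)
  have hψ : F ⊆ G.compatibleEdges ψ :=
    subset_compatibleEdges_piecewise hS hφ (hφ.trans (G.compatibleEdges_subset_smul φ c))
  have heψ : e ∈ G.compatibleEdges ψ := by
    rw [mem_compatibleEdges, hψ_mem hs, hψ_notMem ht]
    exact div_mul_cancel₀ _ (hpos _).ne'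
  have heF : e ∈ F := (eq_compatibleEdges_of_maximal hF (fun v => (hψpos v).ne') hψ).symm ▸ heψ
  exact ht ((hS e heF).1 hs)

theorem eq_of_apply_eq_of_maximal (hconn : G.Connected)
    (hF : Maximal (fun F' => G.OpClosed F' ∧ G.LoopTrivial F') F) (hφ : F ⊆ G.compatibleEdges φ)
    (hψ : F ⊆ G.compatibleEdges ψ) {v₀ : V} (h : φ v₀ = ψ v₀) : φ = ψ := by
  have agree_iff : ∀ e ∈ F, G.s e ∈ {v | φ v = ψ v} ↔ G.t e ∈ {v | φ v = ψ v} := by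
    intro e he
    rw [Set.mem_ofPred_eq, Set.mem_ofPred_eq, mem_compatibleEdges.1 (hφ he),
      mem_compatibleEdges.1 (hψ he), mul_right_inj' (G.μ_pos e).ne']
  have agree_univ : {v | φ v = ψ v} = Set.univ :=
    hconn.eq_univ ⟨v₀, h⟩ fun _ => target_mem_of_maximal hF agree_iff
  exact funext (Set.eq_univ_iff_forall.1 agree_univ)

end WDGraph

open WDGraph in
/-- Given a connected weighted doubled graph, a maximal
`op`-closed loop-trivial set of edges `F`, and a base vertex `∗`, there is a
unique positive function `φ : V → ℝ` with `φ ∗ = 1` and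
`φ (t e) = μ e * φ (s e)` for all `e ∈ F`.  Moreover `φ` transforms paths in
`F` by their weights, and changing the base vertex rescales `φ` by a positive
constant. -/
theorem exists_unique_vertex_functional
    {V E : Type} [Fintype V] [Fintype E] (G : WDGraph V E)
    (hconn : G.Connected) (F : Set E)
    (hFop : G.OpClosed F) (hFtriv : G.LoopTrivial F)
    (hmax : ∀ F' : Set E, G.OpClosed F' → G.LoopTrivial F' → F ⊆ F' → F = F')
    (star : V) :
    (∃! φ : V → ℝ, (∀ v, 0 < φ v) ∧ φ star = 1 ∧
        ∀ e ∈ F, φ (G.t e) = G.μ e * φ (G.s e)) ∧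
    (∀ φ : V → ℝ,
      ((∀ v, 0 < φ v) ∧ φ star = 1 ∧
        ∀ e ∈ F, φ (G.t e) = G.μ e * φ (G.s e)) →
      ((∀ p : G.Path, (∀ e ∈ p.edges, e ∈ F) →
          φ p.target = p.weight * φ p.source) ∧
       (∀ star' : V, ∀ φ' : V → ℝ,
          ((∀ v, 0 < φ' v) ∧ φ' star' = 1 ∧
            ∀ e ∈ F, φ' (G.t e) = G.μ e * φ' (G.s e)) →
          φ' = fun v => (φ star')⁻¹ * φ v))) := by
  have hF : Maximal (fun F' => G.OpClosed F' ∧ G.LoopTrivial F') F :=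
    ⟨⟨hFop, hFtriv⟩, fun F' hF' hle => (hmax F' hF'.1 hF'.2 hle).ge⟩
  refine ⟨existsUnique_of_exists_of_unique
    (exists_normalized_subset_compatibleEdges hFop hFtriv star) ?_, ?_⟩
  · rintro φ ψ ⟨-, hφ_star, hφ⟩ ⟨-, hψ_star, hψ⟩
    exact eq_of_apply_eq_of_maximal hconn hF hφ hψ (hφ_star.trans hψ_star.symm)
  · rintro φ ⟨hpos, -, hφ⟩
    refine ⟨fun p hp => p.apply_target fun e he => hφ e (hp e he), ?_⟩
    rintro star' φ' ⟨-, hφ'_star', hφ'⟩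
    have hscaled : F ⊆ G.compatibleEdges ((φ star')⁻¹ • φ) :=
      Set.Subset.trans hφ (G.compatibleEdges_subset_smul φ _)
    have hscaled_star' : φ' star' = ((φ star')⁻¹ • φ) star' :=
      hφ'_star'.trans (inv_mul_cancel₀ (hpos star').ne').symm
    exact eq_of_apply_eq_of_maximal hconn hF hφ' hscaled hscaled_star'
end

section
/- Let Γ be a weighted doubled graph possessing a loop σ with μ(σ) ≠ 1. Then Γ possesses a loop e₁⋯eₙ such that μ(e₁)·⋯·μ(eₙ) > 1 and such that every partial product satisfies μ(e₁)·⋯·μ(e_k) ≥ 1 for each k = 1, …, n. -/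
/-!
Passing to the reversed loop if necessary, assume the loop has weight greater than `1`. Start it
instead at a vertex where the product of the weights of the edges traversed so far is smallest.
A partial product of the rotated loop is then the ratio of a partial product of the original loop
to the minimal one, multiplied by the weight of the loop once the old base point has been passed;
in both cases it is at least `1`.
-/

section OrderedMonoid

variable {M : Type*} [Monoid M]

section Preorder

variable [Preorder M] [MulRightMono M] [MulLeftReflectLE M]

theorem one_le_mul_swap_of_one_le_mul {a b : M} (h : 1 ≤ a * b) : 1 ≤ b * a := by
  have : a * 1 ≤ a * (b * a) := by
    simpa [mul_assoc] using mul_le_mul_left h a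
  exact le_of_mul_le_mul_left' this

theorem one_le_prod_take_append_swap [MulLeftMono M] {l₁ l₂ : List M}
    (hprod : 1 ≤ (l₁ ++ l₂).prod) (hmin : ∀ k, l₁.prod ≤ ((l₁ ++ l₂).take k).prod) (k : ℕ) :
    1 ≤ ((l₂ ++ l₁).take k).prod := by
  rcases le_total k l₂.length with hk | hk
  · have h := hmin (l₁.length + k)
    rw [List.take_length_add_append, List.prod_append] at h
    rw [List.take_append_of_le_length hk]
    exact one_le_of_le_mul_right h
  · obtain ⟨m, rfl⟩ := Nat.exists_eq_add_of_le hk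
    have hm : l₁.prod ≤ (l₁.take m).prod := by
      rcases le_total m l₁.length with hm | hm
      · simpa [List.take_append_of_le_length hm] using hmin m
      · rw [List.take_of_length_le hm]
    rw [List.prod_append] at hprod
    calc
      1 ≤ l₂.prod * l₁.prod := one_le_mul_swap_of_one_le_mul hprod
      _ ≤ l₂.prod * (l₁.take m).prod := mul_le_mul_right hm _
      _ = ((l₂ ++ l₁).take (l₂.length + m)).prod := by
        rw [List.take_length_add_append, List.prod_append]

end Preorder

section LinearOrder

variable [LinearOrder M]

theorem exists_forall_prod_take_le_prod_take (l : List M) :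
    ∃ n ≤ l.length, ∀ k, (l.take n).prod ≤ (l.take k).prod := by
  obtain ⟨n, hn, hmin⟩ := (Finset.range (l.length + 1)).exists_min_image
    (fun k ↦ (l.take k).prod) ⟨0, by simp⟩
  refine ⟨n, Finset.mem_range_succ_iff.1 hn, fun k ↦ ?_⟩
  rw [List.take_eq_take_min (i := k)]
  exact hmin _ (Finset.mem_range_succ_iff.2 (min_le_right _ _))

theorem exists_rotate_forall_one_le_prod_take [MulLeftMono M] [MulRightMono M]
    [MulLeftReflectLE M] {l : List M} (hl : 1 ≤ l.prod) :
    ∃ n, ∀ k, 1 ≤ ((l.rotate n).take k).prod := by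
  obtain ⟨n, hn, hmin⟩ := exists_forall_prod_take_le_prod_take l
  refine ⟨n, ?_⟩
  rw [List.rotate_eq_drop_append_take hn]
  apply one_le_prod_take_append_swap <;> rwa [List.take_append_drop]

end LinearOrder

end OrderedMonoid

namespace WDGraph

variable {V E : Type} [Fintype V] [Fintype E] {G : WDGraph V E}

/-- The edge weighting with values in the ordered group of positive reals, to which results on
products in ordered monoids apply. -/
def posWeight (G : WDGraph V E) (e : E) : {x : ℝ // 0 < x} := ⟨G.μ e, G.μ_pos e⟩

theorem coe_prod_map_posWeight (l : List E) :
    ((l.map G.posWeight).prod : ℝ) = (l.map G.μ).prod := by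
  induction l with
  | nil => rfl
  | cons e l ih => simp [ih, posWeight]

theorem exists_rotate_forall_one_le_prod_take_map {l : List E} (hl : 1 ≤ (l.map G.μ).prod) :
    ∃ n, ∀ k, 1 ≤ (((l.rotate n).take k).map G.μ).prod := by
  have hpos : 1 ≤ (l.map G.posWeight).prod := by
    rwa [← Subtype.coe_le_coe, coe_prod_map_posWeight]
  obtain ⟨n, hn⟩ := exists_rotate_forall_one_le_prod_take hpos
  refine ⟨n, fun k ↦ ?_⟩
  rw [← coe_prod_map_posWeight, List.map_take, List.map_rotate]
  exact hn k

namespace Path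

theorem weight_pos (p : G.Path) : 0 < p.weight := by
  rw [weight, ← coe_prod_map_posWeight]
  exact Subtype.prop _

/-- The reversed path, which runs through the opposite edges in the opposite order. It serves to
replace a loop of weight less than `1` by one of weight greater than `1`. -/
def reverse (p : G.Path) : G.Path where
  edges := (p.edges.map G.op).reverse
  ne := by simpa using p.ne
  chain := List.isChain_reverse.2 <| (List.isChain_map _).2 <| p.chain.imp fun a b hab ↦ by
    rw [G.t_op, G.s_op, hab]

theorem source_reverse (p : G.Path) : p.reverse.source = p.target := by
  simp [reverse, source, target, G.s_op]

theorem target_reverse (p : G.Path) : p.reverse.target = p.source := by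
  simp [reverse, source, target, G.t_op]

theorem weight_reverse (p : G.Path) : p.reverse.weight = p.weight⁻¹ := by
  simp [reverse, weight, List.prod_reverse, List.prod_inv, Function.comp_def, G.μ_op]

theorem IsLoop.reverse {p : G.Path} (hp : p.IsLoop) : p.reverse.IsLoop := by
  rw [IsLoop, source_reverse, target_reverse]
  exact hp.symm

theorem isLoop_iff_cycle_chain (p : G.Path) :
    p.IsLoop ↔ Cycle.Chain (fun a b ↦ G.t a = G.s b) (p.edges : Cycle E) := by
  rw [Cycle.chain_ne_nil _ p.ne, List.isChain_cons]
  simp only [List.head?_eq_some_head p.ne, Option.mem_some_iff, forall_eq']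
  exact ⟨fun h ↦ ⟨h.symm, p.chain⟩, fun h ↦ h.1.symm⟩

/-- The loop obtained from a loop by moving its first `n` edges to the end, that is, by changing
its base point; `n` is taken modulo the number of edges. -/
def rotate (p : G.Path) (hp : p.IsLoop) (n : ℕ) : G.Path where
  edges := p.edges.rotate n
  ne := by simpa using p.ne
  chain := by
    have h := p.isLoop_iff_cycle_chain.1 hp
    rw [← Cycle.coe_eq_coe.2 (List.IsRotated.forall p.edges n),
      Cycle.chain_ne_nil _ (by simpa using p.ne)] at h
    exact h.of_cons

theorem isLoop_rotate (p : G.Path) (hp : p.IsLoop) (n : ℕ) : (p.rotate hp n).IsLoop := by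
  rw [isLoop_iff_cycle_chain, rotate, Cycle.coe_eq_coe.2 (List.IsRotated.forall p.edges n)]
  exact p.isLoop_iff_cycle_chain.1 hp

theorem weight_rotate (p : G.Path) (hp : p.IsLoop) (n : ℕ) :
    (p.rotate hp n).weight = p.weight :=
  ((List.rotate_perm p.edges n).map G.μ).prod_eq

theorem exists_isLoop_one_lt_weight (p : G.Path) (hp : p.IsLoop) (hw : p.weight ≠ 1) :
    ∃ q : G.Path, q.IsLoop ∧ 1 < q.weight := by
  rcases hw.lt_or_gt with h | h
  · exact ⟨p.reverse, hp.reverse, p.weight_reverse ▸ (one_lt_inv₀ p.weight_pos).2 h⟩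
  · exact ⟨p, hp, h⟩

end Path

end WDGraph

open WDGraph in
/-- If a weighted doubled graph has a loop of weight `≠ 1`,
then it has a loop `e₁ ⋯ eₙ` with `μ(e₁) ⋯ μ(eₙ) > 1` and all partial products
`μ(e₁) ⋯ μ(e_k) ≥ 1` for `k = 1, …, n`. -/
theorem exists_loop_with_partial_products_ge_one
    {V E : Type} [Fintype V] [Fintype E] (G : WDGraph V E)
    (σ : G.Path) (hσ : σ.IsLoop) (hw : σ.weight ≠ 1) :
    ∃ p : G.Path, p.IsLoop ∧ 1 < p.weight ∧
      ∀ k, 1 ≤ k → k ≤ p.edges.length →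
        1 ≤ ((p.edges.take k).map G.μ).prod := by
  obtain ⟨τ, hτ, hτw⟩ := σ.exists_isLoop_one_lt_weight hσ hw
  obtain ⟨n, hn⟩ := exists_rotate_forall_one_le_prod_take_map hτw.le
  exact ⟨τ.rotate hτ n, τ.isLoop_rotate hτ n, (τ.weight_rotate hτ n).symm ▸ hτw,
    fun k _ _ ↦ hn k⟩
end
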